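/- Let A be a k-algebra with a filtration (A(u))_{u ∈ ℕ₀^n} indexed by ℕ₀^n ordered lexicographically, satisfying A(u)·A(v) ⊆ A(u+v), A(u) ⊆ A(v) for u ≤ v, and ∪_u A(u) = A, with each A(u)/∑_{v<u}A(v) finite-dimensional. If the associated ℕ₀^n-graded algebra gr A = ⊕_u A(u)/∑_{v<u} A(v) is a finitely generated free module over a central (or normal) Noetherian subalgebra, then A is Noetherian. -/

import Mathlib

/-!
A left or right ideal `I` of `A` has an associated graded ideal `gr I` of `G`, spanned by the
symbols of the elements of `I`. If `I ≤ J` and `gr J ≤ gr I`, then every element of `J` agrees with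
an element of `I` up to a term of lower filtration degree, so `J ≤ I` by well-founded induction.
Hence `I ↦ gr I` is strictly monotone, and the ascending chain condition passes from `G` to `A`.
-/

theorem inf_iSup_eq_of_iSupIndep {ι α : Type*} [CompleteLattice α] [IsModularLattice α]
    {s t : ι → α} (ht : iSupIndep t) (hst : s ≤ t) (i : ι) : t i ⊓ ⨆ j, s j = s i := by
  refine le_antisymm ?_ (le_inf (hst i) (le_iSup s i))
  have hsplit : ⨆ j, s j ≤ s i ⊔ ⨆ j ≠ i, t j := iSup_le fun j => by
    obtain rfl | hji := eq_or_ne j i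
    · exact le_sup_left
    · exact (hst j).trans (le_sup_of_le_right (le_iSup₂_of_le j hji le_rfl))
  calc t i ⊓ ⨆ j, s j
      ≤ (s i ⊔ ⨆ j ≠ i, t j) ⊓ t i := le_inf (inf_le_right.trans hsplit) inf_le_left
    _ = s i ⊔ (⨆ j ≠ i, t j) ⊓ t i := sup_inf_assoc_of_le _ (hst i)
    _ = s i := by rw [inf_comm, (ht i).eq_bot, sup_bot_eq]

theorem eq_zero_or_exists_mem_of_mem_iSup_lt {ι k M : Type*} [LinearOrder ι] [Semiring k]
    [AddCommMonoid M] [Module k M] {F : ι → Submodule k M} (hF : Monotone F) {u : ι} {x : M}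
    (hx : x ∈ ⨆ v < u, F v) : x = 0 ∨ ∃ v < u, x ∈ F v := by
  rw [iSup_subtype'] at hx
  cases isEmpty_or_nonempty {v // v < u} with
  | inl _ => exact .inl (by simpa only [iSup_of_empty, Submodule.mem_bot] using hx)
  | inr _ =>
    have hmono : Monotone fun v : {v // v < u} => F v := fun _ _ hvw => hF hvw
    obtain ⟨⟨v, hv⟩, hxv⟩ := (Submodule.mem_iSup_of_directed _ hmono.directed_le).1 hx
    exact .inr ⟨v, hv, hxv⟩

section AssociatedGraded

variable {ι k M N : Type*} [Ring k] [AddCommGroup M] [Module k M] [AddCommGroup N] [Module k N]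
  {F : ι → Submodule k M}

/-- The associated graded submodule `gr I` of a submodule `I` of a filtered module: the span of the
symbols `e u x` of the elements `x` of `I`, where `e u` stands for the projection of `F u` onto the
degree `u` part of the associated graded module. -/
def grSubmodule (e : ∀ u, F u →ₗ[k] N) (I : Submodule k M) : Submodule k N :=
  ⨆ u, (I.submoduleOf (F u)).map (e u)

variable {e : ∀ u, F u →ₗ[k] N} {I J : Submodule k M}

theorem apply_mem_grSubmodule {u : ι} {x : F u} (hx : (x : M) ∈ I) : e u x ∈ grSubmodule e I :=
  Submodule.mem_iSup_of_mem u ⟨x, hx, rfl⟩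

theorem grSubmodule_le {P : Submodule k N} :
    grSubmodule e I ≤ P ↔ ∀ u (x : F u), (x : M) ∈ I → e u x ∈ P := by
  simp only [grSubmodule, iSup_le_iff, Submodule.map_le_iff_le_comap]
  rfl

theorem grSubmodule_mono : Monotone (grSubmodule e) := fun _ _ h =>
  grSubmodule_le.2 fun _ _ hx => apply_mem_grSubmodule (h hx)

theorem exists_mem_apply_eq_of_apply_mem_grSubmodule (hindep : iSupIndep fun u => (e u).range)
    {u : ι} {x : F u} (hx : e u x ∈ grSubmodule e I) : ∃ y : F u, (y : M) ∈ I ∧ e u y = e u x := by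
  have hcomponent := inf_iSup_eq_of_iSupIndep hindep
    (fun v => LinearMap.map_le_range (f := e v) (p := I.submoduleOf (F v))) u
  exact hcomponent.le ⟨LinearMap.mem_range_self (e u) x, hx⟩

theorem le_of_grSubmodule_le [LinearOrder ι] [WellFoundedLT ι] (hF : Monotone F)
    (hexh : ∀ x, ∃ u, x ∈ F u) (hindep : iSupIndep fun u => (e u).range)
    (hker : ∀ u (x : F u), e u x = 0 → (x : M) ∈ ⨆ v < u, F v)
    (hIJ : I ≤ J) (hgr : grSubmodule e J ≤ grSubmodule e I) : J ≤ I := by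
  suffices hdeg : ∀ u, ∀ x ∈ F u, x ∈ J → x ∈ I from fun x hx =>
    let ⟨u, hu⟩ := hexh x
    hdeg u x hu hx
  intro u
  induction u using WellFoundedLT.induction with
  | ind u ih =>
    intro x hxu hxJ
    obtain ⟨y, hyI, hy⟩ := exists_mem_apply_eq_of_apply_mem_grSubmodule hindep
      (hgr (apply_mem_grSubmodule (x := ⟨x, hxu⟩) hxJ))
    have hlower : x - y ∈ ⨆ v < u, F v :=
      hker u (⟨x, hxu⟩ - y) (by rw [map_sub, hy, sub_self])
    have hdiff : x - y ∈ I := by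
      obtain hzero | ⟨v, hvu, hv⟩ := eq_zero_or_exists_mem_of_mem_iSup_lt hF hlower
      · exact hzero ▸ I.zero_mem
      · exact ih v hvu _ hv (J.sub_mem hxJ (hIJ hyI))
    exact (I.sub_mem_iff_left hyI).1 hdiff

end AssociatedGraded

section Noetherian

variable {ι k M N : Type*} [CommRing k] [AddCommGroup M] [Module k M] [AddCommGroup N] [Module k N]
  {F : ι → Submodule k M} {R S : Type*} [Semiring R] [Module R M] [Semiring S] [Module S N]

variable (R S) in
/-- The scalars `s : S` whose action on symbols is induced by the action of some `r : R` on the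
filtered module. Asking for these to span `S` makes `gr` of an `R`-submodule an `S`-submodule, and
treats left and right ideals at once. -/
def symbolScalars (e : ∀ u, F u →ₗ[k] N) : Set S :=
  {s | ∃ r : R, ∀ u (x : F u), ∃ v, ∃ hv : r • (x : M) ∈ F v, e v ⟨r • (x : M), hv⟩ = s • e u x}

variable {e : ∀ u, F u →ₗ[k] N} [SMul k R] [IsScalarTower k R M] [Algebra k S] [IsScalarTower k S N]

theorem smul_mem_grSubmodule_restrictScalars (hspan : Submodule.span k (symbolScalars R S e) = ⊤)
    (I : Submodule R M) (s : S) {y : N} (hy : y ∈ grSubmodule e (I.restrictScalars k)) :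
    s • y ∈ grSubmodule e (I.restrictScalars k) := by
  have hs : s ∈ Submodule.span k (symbolScalars R S e) := hspan ▸ Submodule.mem_top
  induction hs using Submodule.span_induction with
  | mem s hs =>
    obtain ⟨r, hr⟩ := hs
    have hle : grSubmodule e (I.restrictScalars k) ≤
        (grSubmodule e (I.restrictScalars k)).comap (Algebra.lsmul k k N s) :=
      grSubmodule_le.2 fun u x hx => by
        obtain ⟨v, hv, hsymbol⟩ := hr u x
        have hmem : s • e u x ∈ grSubmodule e (I.restrictScalars k) := hsymbol ▸
          apply_mem_grSubmodule (I.smul_mem r hx)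
        exact hmem
    exact hle hy
  | zero => simp only [zero_smul, zero_mem]
  | add s t _ _ hs ht => exact add_smul s t y ▸ add_mem hs ht
  | smul c s _ hs => exact smul_assoc c s y ▸ Submodule.smul_mem _ c hs

theorem isNoetherian_of_span_symbolScalars_eq_top [LinearOrder ι] [WellFoundedLT ι]
    (hF : Monotone F) (hexh : ∀ x, ∃ u, x ∈ F u) (hindep : iSupIndep fun u => (e u).range)
    (hker : ∀ u (x : F u), e u x = 0 → (x : M) ∈ ⨆ v < u, F v)
    (hspan : Submodule.span k (symbolScalars R S e) = ⊤) [IsNoetherian S N] :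
    IsNoetherian R M := by
  let gr (I : Submodule R M) : Submodule S N :=
    { grSubmodule e (I.restrictScalars k) with
      smul_mem' := fun s _ hy => smul_mem_grSubmodule_restrictScalars hspan I s hy }
  have hgr : StrictMono gr := by
    intro I J hIJ
    have hle : I.restrictScalars k ≤ J.restrictScalars k := hIJ.le
    refine lt_of_le_not_ge (grSubmodule_mono hle) fun hgrle => hIJ.not_ge ?_
    have hge : J.restrictScalars k ≤ I.restrictScalars k :=
      le_of_grSubmodule_le hF hexh hindep hker hle hgrle
    exact hge
  exact isNoetherian_iff'.2 hgr.wellFoundedGT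

end Noetherian

theorem isNoetherian_mulOpposite_iff {R : Type*} [Semiring R] :
    IsNoetherian Rᵐᵒᵖ R ↔ IsNoetherianRing Rᵐᵒᵖ :=
  (MulOpposite.opLinearEquiv Rᵐᵒᵖ : R ≃ₗ[Rᵐᵒᵖ] Rᵐᵒᵖ).isNoetherian_iff

theorem isNoetherianRing_mulOpposite_of_finite (Z R : Type*) [Ring Z] [Ring R] [Module Z R]
    [SMulCommClass Z R R] [IsNoetherianRing Z] [Module.Finite Z R] : IsNoetherianRing Rᵐᵒᵖ :=
  isNoetherian_mulOpposite_iff.1 (isNoetherian_of_tower Z inferInstance)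

theorem noetherian_of_multifiltration_general {ι k A G : Type*} [LinearOrder ι] [WellFoundedLT ι]
    [Add ι] [CommRing k] [Ring A] [Algebra k A] [Ring G] [Algebra k G]
    (F : ι → Submodule k A) (hF : Monotone F)
    (hmul : ∀ u v, ∀ x ∈ F u, ∀ y ∈ F v, x * y ∈ F (u + v))
    (hexh : ∀ a, ∃ u, a ∈ F u)
    (e : ∀ u, F u →ₗ[k] G)
    (hindep : iSupIndep fun u => (e u).range) (hspan : ⨆ u, (e u).range = ⊤)
    (hker : ∀ u (x : F u), e u x = 0 → (x : A) ∈ ⨆ v < u, F v)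
    (hmule : ∀ u v (x : F u) (y : F v),
      e (u + v) ⟨(x : A) * (y : A), hmul u v x x.2 y y.2⟩ = e u x * e v y) :
    (IsNoetherianRing G → IsNoetherianRing A) ∧
      (IsNoetherianRing Gᵐᵒᵖ → IsNoetherianRing Aᵐᵒᵖ) := by
  constructor
  · intro _
    have hleft : ⨆ u, (e u).range ≤ Submodule.span k (symbolScalars A G e) :=
      iSup_le fun u => by
        rintro _ ⟨a, rfl⟩
        exact Submodule.subset_span ⟨a, fun v x => ⟨u + v, hmul u v a a.2 x x.2, hmule u v a x⟩⟩
    exact isNoetherian_of_span_symbolScalars_eq_top hF hexh hindep hker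
      (top_le_iff.1 (hspan ▸ hleft))
  · intro hG
    have := isNoetherian_mulOpposite_iff.2 hG
    have hright : ⨆ u, (e u).range ≤ (Submodule.span k (symbolScalars Aᵐᵒᵖ Gᵐᵒᵖ e)).comap
        (MulOpposite.opLinearEquiv k).toLinearMap :=
      iSup_le fun u => by
        rintro _ ⟨a, rfl⟩
        exact Submodule.subset_span
          ⟨.op a, fun v x => ⟨v + u, hmul v u x x.2 a a.2, hmule v u x a⟩⟩
    refine isNoetherian_mulOpposite_iff.1
      (isNoetherian_of_span_symbolScalars_eq_top hF hexh hindep hker (S := Gᵐᵒᵖ) ?_)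
    exact Submodule.eq_top_iff'.2 fun s => hright (hspan ▸ Submodule.mem_top : s.unop ∈ _)

/-- If a `k`-algebra `A` has an exhaustive multiplicative filtration indexed by `ℕ^n` with the
lexicographic order, with finite-dimensional associated graded pieces, and the associated
graded algebra (realized as a graded algebra `G` with pieces `𝒢 u` together with compatible
maps `e u : F u → G` inducing isomorphisms `F u / ∑_{v <ₗₑₓ u} F v ≅ 𝒢 u`) is a finitely
generated free module over a central Noetherian subalgebra, then `A` is Noetherian. -/
theorem noetherian_of_multifiltration {k : Type*} [Field k]
    {A : Type*} [Ring A] [Algebra k A] (n : ℕ)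
    (F : (Fin n → ℕ) → Submodule k A)
    (hone : (1 : A) ∈ F 0)
    (hmono : ∀ u v : Fin n → ℕ, toLex u ≤ toLex v → F u ≤ F v)
    (hmul : ∀ u v : Fin n → ℕ, ∀ x ∈ F u, ∀ y ∈ F v, x * y ∈ F (u + v))
    (hexh : ∀ a : A, ∃ u, a ∈ F u)
    {G : Type*} [Ring G] [Algebra k G]
    (𝒢 : (Fin n → ℕ) → Submodule k G) [GradedAlgebra 𝒢]
    (hfin : ∀ u, FiniteDimensional k ↥(𝒢 u))
    (e : ∀ u, F u →ₗ[k] G)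
    (hrange : ∀ u, LinearMap.range (e u) = 𝒢 u)
    (hker : ∀ u (x : F u), e u x = 0 ↔
      (x : A) ∈ ⨆ (v : Fin n → ℕ) (_ : toLex v < toLex u), F v)
    (hmule : ∀ (u v : Fin n → ℕ) (x : F u) (y : F v),
      e (u + v) ⟨(x : A) * (y : A), hmul u v x x.2 y y.2⟩ = e u x * e v y)
    (Z : Subalgebra k G)
    (hZcentral : ∀ z ∈ Z, ∀ g : G, z * g = g * z)
    (hZnoeth : IsNoetherianRing Z)
    (hGfin : Module.Finite Z G) (hGfree : Module.Free Z G) :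
    IsNoetherianRing A ∧ IsNoetherianRing Aᵐᵒᵖ := by
  obtain rfl : 𝒢 = fun u => (e u).range := funext fun u => (hrange u).symm
  have hinternal := DirectSum.Decomposition.isInternal fun u => (e u).range
  have : SMulCommClass Z G G := ⟨fun z g h => by
    simpa only [mul_assoc] using! congrArg (· * h) (hZcentral z z.2 g)⟩
  exact (noetherian_of_multifiltration_general (ι := Lex (Fin n → ℕ)) (fun u => F (ofLex u))
    (fun u v => hmono (ofLex u) (ofLex v)) (fun u v => hmul (ofLex u) (ofLex v)) hexh
    (fun u => e (ofLex u)) hinternal.submodule_iSupIndep hinternal.submodule_iSup_eq_top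
    (fun u x => (hker (ofLex u) x).1) (fun u v => hmule (ofLex u) (ofLex v))).imp
    (· (.of_finite Z G)) (· (isNoetherianRing_mulOpposite_of_finite Z G))
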